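/- arXiv:1507.05214 — 6 statements merged into one kernel-verified Lean document; each statement's English description precedes it below -/
import Mathlib

section
/- The matrix P is primitive: there exists an integer k ≥ 1 such that every entry of P^k is strictly positive. -/
open Matrix

/-- The random-walk transition matrix `H` of a bipartite graph with parts `U`, `V`
and edge relation `E`: `H i j = 1 / dᵢ` if `j` is adjacent to `i`, and `0` otherwise. -/
noncomputable def Hmat {U V : Type*} [Fintype U] [Fintype V]
    (E : U → V → Prop) [∀ u v, Decidable (E u v)] :
    Matrix (U ⊕ V) (U ⊕ V) ℝ :=
  Matrix.of fun i j =>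
    match i, j with
    | Sum.inl u, Sum.inr v =>
        if E u v then 1 / ((Finset.univ.filter fun v' => E u v').card : ℝ) else 0
    | Sum.inr v, Sum.inl u =>
        if E u v then 1 / ((Finset.univ.filter fun u' => E u' v).card : ℝ) else 0
    | _, _ => 0

/-- The block-wise teleportation matrix `M`: `M i j = 1 / xᵢ` if `j` lies in the same
part as `i` (where `xᵢ` is the size of the part containing `i`), and `0` otherwise. -/
noncomputable def Mmat (U V : Type*) [Fintype U] [Fintype V] :
    Matrix (U ⊕ V) (U ⊕ V) ℝ :=
  Matrix.of fun i j =>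
    match i, j with
    | Sum.inl _, Sum.inl _ => 1 / (Fintype.card U : ℝ)
    | Sum.inr _, Sum.inr _ => 1 / (Fintype.card V : ℝ)
    | _, _ => 0

/-- The BipartiteRank transition matrix `P = ε H + (1 - ε) M`. -/
noncomputable def Pmat {U V : Type*} [Fintype U] [Fintype V]
    (E : U → V → Prop) [∀ u v, Decidable (E u v)] (ε : ℝ) :
    Matrix (U ⊕ V) (U ⊕ V) ℝ :=
  ε • Hmat E + (1 - ε) • Mmat U V


/-- `P` is primitive: some power of `P` has all entries strictly positive. -/
theorem Pmat_primitive {U V : Type*} [Fintype U] [Fintype V]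
    [DecidableEq U] [DecidableEq V] [Nonempty U] [Nonempty V]
    (E : U → V → Prop) [∀ u v, Decidable (E u v)]
    (hedge : ∃ u v, E u v)
    (hnoIsolU : ∀ u : U, ∃ v : V, E u v) (hnoIsolV : ∀ v : V, ∃ u : U, E u v)
    (ε : ℝ) (hε0 : 0 < ε) (hε1 : ε < 1) :
    ∃ k : ℕ, 1 ≤ k ∧ ∀ i j : U ⊕ V, 0 < (Pmat E ε ^ k) i j := by
  have h1 : 0 < 1 - ε := by linarith
  have hnn : ∀ i j, 0 ≤ Pmat E ε i j := by
    rintro (u | v) (u' | v') <;> simp only [Pmat, Hmat, Mmat, Matrix.add_apply,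
      Matrix.smul_apply, Matrix.of_apply, smul_eq_mul]
    · positivity
    · split_ifs <;> positivity
    · split_ifs <;> positivity
    · positivity
  have hUU : ∀ u u' : U, 0 < Pmat E ε (Sum.inl u) (Sum.inl u') := by
    intro u u'
    have : 0 < (Fintype.card U : ℝ) := by exact_mod_cast Fintype.card_pos
    simp only [Pmat, Hmat, Mmat, Matrix.add_apply, Matrix.smul_apply, Matrix.of_apply,
      smul_eq_mul]
    positivity
  have hVV : ∀ v v' : V, 0 < Pmat E ε (Sum.inr v) (Sum.inr v') := by
    intro v v'
    have : 0 < (Fintype.card V : ℝ) := by exact_mod_cast Fintype.card_pos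
    simp only [Pmat, Hmat, Mmat, Matrix.add_apply, Matrix.smul_apply, Matrix.of_apply,
      smul_eq_mul]
    positivity
  have hUV : ∀ u v, E u v → 0 < Pmat E ε (Sum.inl u) (Sum.inr v) := by
    intro u v h
    have : 0 < ((Finset.univ.filter fun v' => E u v').card : ℝ) := by
      exact_mod_cast Finset.card_pos.mpr ⟨v, by simpa using h⟩
    simp only [Pmat, Hmat, Mmat, Matrix.add_apply, Matrix.smul_apply, Matrix.of_apply,
      smul_eq_mul, if_pos h]
    positivity
  have hVU : ∀ u v, E u v → 0 < Pmat E ε (Sum.inr v) (Sum.inl u) := by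
    intro u v h
    have : 0 < ((Finset.univ.filter fun u' => E u' v).card : ℝ) := by
      exact_mod_cast Finset.card_pos.mpr ⟨u, by simpa using h⟩
    simp only [Pmat, Hmat, Mmat, Matrix.add_apply, Matrix.smul_apply, Matrix.of_apply,
      smul_eq_mul, if_pos h]
    positivity
  have key : ∀ i l j, 0 < Pmat E ε i l → 0 < Pmat E ε l j → 0 < (Pmat E ε ^ 2) i j := by
    intro i l j ha hb
    rw [pow_two, Matrix.mul_apply]
    exact Finset.sum_pos' (fun x _ => mul_nonneg (hnn _ _) (hnn _ _))
      ⟨l, Finset.mem_univ _, mul_pos ha hb⟩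
  refine ⟨2, by norm_num, ?_⟩
  rintro (u | v) (u' | v')
  · exact key _ (Sum.inl u) _ (hUU _ _) (hUU _ _)
  · obtain ⟨w, hw⟩ := hnoIsolV v'
    exact key _ (Sum.inl w) _ (hUU _ _) (hUV _ _ hw)
  · obtain ⟨w, hw⟩ := hnoIsolU u'
    exact key _ (Sum.inr w) _ (hVV _ _) (hVU _ _ hw)
  · exact key _ (Sum.inr v) _ (hVV _ _) (hVV _ _)
end

section
/- There exists a unique row vector π ∈ ℝ^N with nonnegative entries summing to 1 such that πᵀP = πᵀ (a unique stationary probability distribution of the chain with transition matrix P); moreover, every entry of π is strictly positive. -/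
open Matrix

lemma aux_abs {ι : Type*} [Fintype ι] (P : Matrix ι ι ℝ) (h0 : ∀ i j, 0 ≤ P i j)
    (h1 : ∀ i, ∑ j, P i j = 1) (x : ι → ℝ) (hx : x ᵥ* P = x) :
    (fun i => |x i|) ᵥ* P = fun i => |x i| := by
  have hle : ∀ j ∈ Finset.univ, |x j| ≤ ∑ i, |x i| * P i j := by
    intro j _
    have h := congrFun hx j
    simp only [Matrix.vecMul, dotProduct] at h
    rw [← h]
    refine (Finset.abs_sum_le_sum_abs _ _).trans (le_of_eq ?_)
    refine Finset.sum_congr rfl fun i _ => ?_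
    rw [abs_mul, abs_of_nonneg (h0 i j)]
  have hs : ∑ j, |x j| = ∑ j, ∑ i, |x i| * P i j := by
    rw [Finset.sum_comm]
    refine Finset.sum_congr rfl fun i _ => ?_
    rw [← Finset.mul_sum, h1, mul_one]
  have := (Finset.sum_eq_sum_iff_of_le hle).1 hs
  funext j
  simp only [Matrix.vecMul, dotProduct]
  exact (this j (Finset.mem_univ _)).symm

lemma aux_pos {ι : Type*} [Fintype ι] (P : Matrix ι ι ℝ) (h0 : ∀ i j, 0 ≤ P i j)
    (hp : ∀ i j, ∃ k, 0 < P i k ∧ 0 < P k j) (z : ι → ℝ) (hz : z ᵥ* P = z)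
    (hz0 : ∀ i, 0 ≤ z i) (i : ι) (hi : z i ≠ 0) (j : ι) : 0 < z j := by
  have step : ∀ a b, 0 < z a → 0 < P a b → 0 < z b := by
    intro a b ha hab
    have h := congrFun hz b
    simp only [Matrix.vecMul, dotProduct] at h
    rw [← h]
    exact lt_of_lt_of_le (mul_pos ha hab) (Finset.single_le_sum
      (f := fun i => z i * P i b) (fun i _ => mul_nonneg (hz0 i) (h0 i b)) (Finset.mem_univ a))
  obtain ⟨k, h1, h2⟩ := hp i j
  exact step k j (step i k (lt_of_le_of_ne (hz0 i) (Ne.symm hi)) h1) h2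

lemma aux_zero {ι : Type*} [Fintype ι] (P : Matrix ι ι ℝ) (h0 : ∀ i j, 0 ≤ P i j)
    (h1 : ∀ i, ∑ j, P i j = 1)
    (hp : ∀ i j, ∃ k, 0 < P i k ∧ 0 < P k j) (y : ι → ℝ) (hy : y ᵥ* P = y)
    (hs : ∑ i, y i = 0) : y = 0 := by
  have ha := aux_abs P h0 h1 y hy
  have hA : ((fun i => |y i|) + y) ᵥ* P = (fun i => |y i|) + y := by
    rw [Matrix.add_vecMul, ha, hy]
  have hB : ((fun i => |y i|) - y) ᵥ* P = (fun i => |y i|) - y := by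
    rw [Matrix.sub_vecMul, ha, hy]
  have pA := aux_pos P h0 hp _ hA (fun i => by
    simp only [Pi.add_apply]; linarith [neg_abs_le (y i)])
  have pB := aux_pos P h0 hp _ hB (fun i => by
    simp only [Pi.sub_apply]; linarith [le_abs_self (y i)])
  simp only [Pi.add_apply, Pi.sub_apply] at pA pB
  by_cases c1 : ∀ i, |y i| + y i = 0
  · have hn : ∀ i ∈ Finset.univ, y i ≤ 0 := fun i _ => by
      linarith [c1 i, abs_nonneg (y i)]
    funext i
    exact (Finset.sum_eq_zero_iff_of_nonpos hn).1 hs i (Finset.mem_univ _)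
  by_cases c2 : ∀ i, |y i| - y i = 0
  · have hn : ∀ i ∈ Finset.univ, 0 ≤ y i := fun i _ => by
      linarith [c2 i, abs_nonneg (y i)]
    funext i
    exact (Finset.sum_eq_zero_iff_of_nonneg hn).1 hs i (Finset.mem_univ _)
  push Not at c1 c2
  obtain ⟨a, c1⟩ := c1
  obtain ⟨b, c2⟩ := c2
  have q1 := pA a c1 a
  have q2 := pB b c2 a
  rcases abs_cases (y a) with ⟨h, _⟩ | ⟨h, _⟩ <;> rw [h] at q1 q2 <;> linarith

lemma aux_main {ι : Type*} [Fintype ι] [DecidableEq ι] [Nonempty ι] (P : Matrix ι ι ℝ)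
    (h0 : ∀ i j, 0 ≤ P i j) (h1 : ∀ i, ∑ j, P i j = 1)
    (hp : ∀ i j, ∃ k, 0 < P i k ∧ 0 < P k j) :
    ∃ π : ι → ℝ,
      ((∀ i, 0 ≤ π i) ∧ ∑ i, π i = 1 ∧ π ᵥ* P = π) ∧
      (∀ π' : ι → ℝ,
        ((∀ i, 0 ≤ π' i) ∧ ∑ i, π' i = 1 ∧ π' ᵥ* P = π') → π' = π) ∧
      (∀ i, 0 < π i) := by
  have hdet : (P - 1).det = 0 := by
    refine Matrix.exists_mulVec_eq_zero_iff.1 ⟨fun _ => 1, ?_, ?_⟩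
    · intro h
      exact one_ne_zero (congrFun h (Classical.arbitrary ι))
    · rw [Matrix.sub_mulVec, Matrix.one_mulVec]
      funext i
      simp [Matrix.mulVec, dotProduct, h1]
  obtain ⟨x, hx0, hx⟩ := Matrix.exists_vecMul_eq_zero_iff.2 hdet
  rw [Matrix.vecMul_sub, Matrix.vecMul_one, sub_eq_zero] at hx
  have ha := aux_abs P h0 h1 x hx
  obtain ⟨i, hi⟩ := Function.ne_iff.1 hx0
  have hpos := aux_pos P h0 hp _ ha (fun i => abs_nonneg _) i (abs_ne_zero.2 hi)
  have hS : 0 < ∑ i, |x i| := Finset.sum_pos (fun j _ => hpos j) Finset.univ_nonempty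
  have hfix : ((∑ i, |x i|)⁻¹ • fun i => |x i|) ᵥ* P = (∑ i, |x i|)⁻¹ • fun i => |x i| := by
    rw [Matrix.smul_vecMul, ha]
  have hpp : ∀ j, 0 < ((∑ i, |x i|)⁻¹ • fun i => |x i|) j := fun j =>
    mul_pos (inv_pos.2 hS) (hpos j)
  have hsum : ∑ j, ((∑ i, |x i|)⁻¹ • fun i => |x i|) j = 1 := by
    simp only [Pi.smul_apply, smul_eq_mul]
    rw [← Finset.mul_sum, inv_mul_cancel₀ hS.ne']
  refine ⟨_, ⟨fun j => (hpp j).le, hsum, hfix⟩, ?_, hpp⟩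
  rintro π' ⟨_, hs', hf'⟩
  rw [← sub_eq_zero]
  refine aux_zero P h0 h1 hp _ ?_ ?_
  · rw [Matrix.sub_vecMul, hf', hfix]
  · simp only [Pi.sub_apply]
    rw [Finset.sum_sub_distrib, hs', hsum, sub_self]

/-- There is a unique stationary probability distribution `π` (a nonnegative row vector
summing to `1` with `πᵀ P = πᵀ`), and all its entries are strictly positive. -/
theorem Pmat_stationary_exists_unique_pos {U V : Type*} [Fintype U] [Fintype V]
    [DecidableEq U] [DecidableEq V] [Nonempty U] [Nonempty V]
    (E : U → V → Prop) [∀ u v, Decidable (E u v)]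
    (hedge : ∃ u v, E u v)
    (hnoIsolU : ∀ u : U, ∃ v : V, E u v) (hnoIsolV : ∀ v : V, ∃ u : U, E u v)
    (ε : ℝ) (hε0 : 0 < ε) (hε1 : ε < 1) :
    ∃ π : (U ⊕ V) → ℝ,
      ((∀ i, 0 ≤ π i) ∧ ∑ i, π i = 1 ∧ π ᵥ* Pmat E ε = π) ∧
      (∀ π' : (U ⊕ V) → ℝ,
        ((∀ i, 0 ≤ π' i) ∧ ∑ i, π' i = 1 ∧ π' ᵥ* Pmat E ε = π') → π' = π) ∧
      (∀ i, 0 < π i) := by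
  have hdU : ∀ u : U, (0:ℝ) < ((Finset.univ.filter fun v' => E u v').card : ℝ) := fun u => by
    obtain ⟨v, hv⟩ := hnoIsolU u
    exact_mod_cast Finset.card_pos.2 ⟨v, by simpa using hv⟩
  have hdV : ∀ v : V, (0:ℝ) < ((Finset.univ.filter fun u' => E u' v).card : ℝ) := fun v => by
    obtain ⟨u, hu⟩ := hnoIsolV v
    exact_mod_cast Finset.card_pos.2 ⟨u, by simpa using hu⟩
  have hcU : (0:ℝ) < Fintype.card U := by exact_mod_cast Fintype.card_pos
  have hcV : (0:ℝ) < Fintype.card V := by exact_mod_cast Fintype.card_pos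
  have hδ : 0 < 1 - ε := by linarith
  have eUU : ∀ u u', Pmat E ε (Sum.inl u) (Sum.inl u') = (1 - ε) * (1 / (Fintype.card U : ℝ)) := by
    intro u u'; simp [Pmat, Hmat, Mmat]
  have eVV : ∀ u u', Pmat E ε (Sum.inr u) (Sum.inr u') = (1 - ε) * (1 / (Fintype.card V : ℝ)) := by
    intro u u'; simp [Pmat, Hmat, Mmat]
  have eUV : ∀ u v, Pmat E ε (Sum.inl u) (Sum.inr v) = ε * 
      (if E u v then 1 / ((Finset.univ.filter fun v' => E u v').card : ℝ) else 0) := by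
    intro u v; simp [Pmat, Hmat, Mmat]
  have eVU : ∀ v u, Pmat E ε (Sum.inr v) (Sum.inl u) = ε * 
      (if E u v then 1 / ((Finset.univ.filter fun u' => E u' v).card : ℝ) else 0) := by
    intro v u; simp [Pmat, Hmat, Mmat]
  have pUU : ∀ u u', 0 < Pmat E ε (Sum.inl u) (Sum.inl u') := fun u u' => by
    rw [eUU]; positivity
  have pVV : ∀ u u', 0 < Pmat E ε (Sum.inr u) (Sum.inr u') := fun u u' => by
    rw [eVV]; positivity
  have pUV : ∀ u v, E u v → 0 < Pmat E ε (Sum.inl u) (Sum.inr v) := fun u v h => by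
    rw [eUV, if_pos h]; exact mul_pos hε0 (one_div_pos.2 (hdU u))
  have pVU : ∀ v u, E u v → 0 < Pmat E ε (Sum.inr v) (Sum.inl u) := fun v u h => by
    rw [eVU, if_pos h]; exact mul_pos hε0 (one_div_pos.2 (hdV v))
  apply aux_main
  · rintro (u | v) (u' | v')
    · exact (pUU _ _).le
    · by_cases h : E u v'
      · exact (pUV _ _ h).le
      · rw [eUV, if_neg h, mul_zero]
    · by_cases h : E u' v
      · exact (pVU _ _ h).le
      · rw [eVU, if_neg h, mul_zero]
    · exact (pVV _ _).le
  · rintro (u | v)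
    · rw [Fintype.sum_sum_type]
      simp only [eUU, eUV]
      rw [← Finset.mul_sum, ← Finset.mul_sum, ← Finset.sum_filter, Finset.sum_const, Finset.sum_const,
        Finset.card_univ, nsmul_eq_mul, nsmul_eq_mul, mul_one_div_cancel (hdU u).ne']
      field_simp
      ring
    · rw [Fintype.sum_sum_type]
      simp only [eVV, eVU]
      rw [← Finset.mul_sum, ← Finset.mul_sum, ← Finset.sum_filter, Finset.sum_const, Finset.sum_const,
        Finset.card_univ, nsmul_eq_mul, nsmul_eq_mul, mul_one_div_cancel (hdV v).ne']
      field_simp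
      ring
  · rintro (u | v) (u' | v')
    · exact ⟨Sum.inl u, pUU _ _, pUU _ _⟩
    · obtain ⟨w, hw⟩ := hnoIsolV v'
      exact ⟨Sum.inl w, pUU _ _, pUV _ _ hw⟩
    · obtain ⟨w, hw⟩ := hnoIsolU u'
      exact ⟨Sum.inr w, pVV _ _, pVU _ _ hw⟩
    · exact ⟨Sum.inr v, pVV _ _, pVV _ _⟩
end

section
/- Let S be an n×n real row-stochastic matrix, let 0 ≤ ε < 1, and let G = εS + (1−ε)(1/n)·eeᵀ be the associated Google matrix. Then every complex eigenvalue λ of G with λ ≠ 1 satisfies |λ| ≤ ε; in particular the subdominant eigenvalue λ₂ of G satisfies |λ₂(G)| ≤ ε. -/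
open Matrix

/-- Every eigenvalue `λ ≠ 1` of the Google matrix `G = ε S + (1-ε) (1/n) e eᵀ`
built from a row-stochastic matrix `S` satisfies `|λ| ≤ ε`; in particular its
subdominant eigenvalue satisfies `|λ₂(G)| ≤ ε`. -/
theorem google_subdominant_le (n : ℕ) (hn : 0 < n) (S : Matrix (Fin n) (Fin n) ℝ)
    (hS0 : ∀ i j, 0 ≤ S i j) (hS1 : ∀ i, ∑ j, S i j = 1)
    (ε : ℝ) (hε0 : 0 ≤ ε) (hε1 : ε < 1) :
    ∀ lam : ℂ,
      lam ∈ spectrum ℂ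
        ((ε • S + (1 - ε) • Matrix.of fun _ _ : Fin n => (1 : ℝ) / n).map
          Complex.ofReal) →
      lam ≠ 1 → ‖lam‖ ≤ ε := by
  intro lam hlam hne
  rw [spectrum.mem_iff, Matrix.isUnit_iff_isUnit_det, isUnit_iff_ne_zero, not_not] at hlam
  obtain ⟨w, hw0, hw⟩ := Matrix.exists_vecMul_eq_zero_iff.mpr hlam
  have hn' : (n : ℂ) ≠ 0 := by exact_mod_cast hn.ne'
  have hS1c : ∀ i, ∑ j, (S i j : ℂ) = 1 := fun i => by exact_mod_cast hS1 i
  -- the left eigenvector equation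
  have key : ∀ j, lam * w j = ε * ∑ i, w i * (S i j : ℂ) + (1 - ε) * (1 / n) * ∑ i, w i := by
    intro j
    have h := congrFun hw j
    rw [Matrix.vecMul_sub, Pi.sub_apply, Pi.zero_apply, sub_eq_zero, Algebra.algebraMap_eq_smul_one,
      Matrix.vecMul_smul, Matrix.vecMul_one, Pi.smul_apply, smul_eq_mul] at h
    rw [h, Matrix.vecMul, dotProduct, Finset.mul_sum, Finset.mul_sum, ← Finset.sum_add_distrib]
    refine Finset.sum_congr rfl fun i _ => ?_
    simp only [Matrix.map_apply, Matrix.add_apply, Matrix.smul_apply, Matrix.of_apply, smul_eq_mul]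
    push_cast
    ring
  have hswap : ∑ j, ∑ i, w i * (S i j : ℂ) = ∑ i, w i := by
    rw [Finset.sum_comm]
    refine Finset.sum_congr rfl fun i _ => ?_
    rw [← Finset.mul_sum, hS1c, mul_one]
  have hsum : lam * ∑ i, w i = ∑ i, w i := by
    have h : ∑ j, lam * w j
        = ∑ j, (ε * ∑ i, w i * (S i j : ℂ) + (1 - ε) * (1 / n) * ∑ i, w i) :=
      Finset.sum_congr rfl fun j _ => key j
    rw [← Finset.mul_sum, Finset.sum_add_distrib, ← Finset.mul_sum, hswap, Finset.sum_const,
      Finset.card_univ, Fintype.card_fin, nsmul_eq_mul] at h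
    rw [h]
    field_simp
    ring
  have hz : ∑ i, w i = 0 := by
    have h : (lam - 1) * ∑ i, w i = 0 := by rw [sub_mul, hsum]; ring
    exact (mul_eq_zero.mp h).resolve_left (sub_ne_zero.mpr hne)
  have hb : ∀ j, ‖lam‖ * ‖w j‖ ≤ ε * ∑ i, ‖w i‖ * S i j := by
    intro j
    rw [← norm_mul, key j, hz, mul_zero, add_zero, norm_mul, Complex.norm_real,
      Real.norm_of_nonneg hε0]
    refine mul_le_mul_of_nonneg_left ((norm_sum_le _ _).trans (le_of_eq ?_)) hε0
    refine Finset.sum_congr rfl fun i _ => ?_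
    rw [norm_mul, Complex.norm_real, Real.norm_of_nonneg (hS0 i j)]
  have htot : ‖lam‖ * ∑ j, ‖w j‖ ≤ ε * ∑ j, ‖w j‖ := by
    have h := Finset.sum_le_sum fun j (_ : j ∈ Finset.univ) => hb j
    rw [← Finset.mul_sum, ← Finset.mul_sum, Finset.sum_comm (f := fun j i => ‖w i‖ * S i j)] at h
    simpa only [← Finset.mul_sum, hS1, mul_one] using h
  have hpos : 0 < ∑ j, ‖w j‖ := by
    obtain ⟨k, hk⟩ := Function.ne_iff.mp hw0
    exact Finset.sum_pos' (fun _ _ => norm_nonneg _) ⟨k, Finset.mem_univ k, norm_pos_iff.mpr hk⟩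
  exact le_of_mul_le_mul_right htot hpos
end

section
/- Let S be an n×n real row-stochastic matrix, let 0 ≤ ε < 1, and let G = εS + (1−ε)(1/n)·eeᵀ. If μ ∈ ℂ is an eigenvalue of S with μ ≠ 1, then εμ is an eigenvalue of G. (Consequently, if S has an eigenvalue of modulus 1 other than 1, then G has an eigenvalue of modulus exactly ε, so |λ₂(G)| = ε.) -/
open Matrix

theorem mem_spectrum_iff_left {n : ℕ} (A : Matrix (Fin n) (Fin n) ℂ) (μ : ℂ) :
    μ ∈ spectrum ℂ A ↔ ∃ v : Fin n → ℂ, v ≠ 0 ∧ ∀ j, ∑ i, v i * A i j = μ * v j := by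
  rw [spectrum.mem_iff, Matrix.isUnit_iff_isUnit_det, isUnit_iff_ne_zero, not_not,
    ← Matrix.exists_vecMul_eq_zero_iff]
  refine exists_congr fun v => and_congr_right fun _ => ?_
  rw [Matrix.vecMul_sub, sub_eq_zero, Algebra.algebraMap_eq_smul_one, Matrix.vecMul_smul,
    Matrix.vecMul_one, funext_iff]
  refine forall_congr' fun j => ?_
  simp only [Pi.smul_apply, smul_eq_mul, Matrix.vecMul, dotProduct]
  exact eq_comm

/-- If `μ ≠ 1` is an eigenvalue of a row-stochastic matrix `S`, then `ε μ` is an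
eigenvalue of the Google matrix `G = ε S + (1-ε) (1/n) e eᵀ`. -/
theorem google_eigenvalue_shift (n : ℕ) (hn : 0 < n) (S : Matrix (Fin n) (Fin n) ℝ)
    (hS0 : ∀ i j, 0 ≤ S i j) (hS1 : ∀ i, ∑ j, S i j = 1)
    (ε : ℝ) (hε0 : 0 ≤ ε) (hε1 : ε < 1) :
    ∀ μ : ℂ, μ ∈ spectrum ℂ (S.map Complex.ofReal) → μ ≠ 1 →
      (ε : ℂ) * μ ∈ spectrum ℂ
        ((ε • S + (1 - ε) • Matrix.of fun _ _ : Fin n => (1 : ℝ) / n).map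
          Complex.ofReal) := by
  intro μ hμ h1
  rw [mem_spectrum_iff_left] at hμ ⊢
  obtain ⟨v, hv, h⟩ := hμ
  refine ⟨v, hv, fun j => ?_⟩
  simp only [Matrix.map_apply] at h
  have hs : ∑ i, v i = μ * ∑ i, v i := by
    rw [Finset.mul_sum, ← Finset.sum_congr rfl fun j _ => h j, Finset.sum_comm]
    refine Finset.sum_congr rfl fun i _ => ?_
    rw [← Finset.mul_sum, ← Complex.ofReal_sum, hS1]
    simp
  have h0 : ∑ i, v i = 0 := by
    have : (μ - 1) * ∑ i, v i = 0 := by linear_combination -hs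
    exact (mul_eq_zero.mp this).resolve_left (sub_ne_zero.mpr h1)
  have key : ∀ i, v i * ((ε • S + (1 - ε) • Matrix.of fun _ _ : Fin n => (1 : ℝ) / n).map
      Complex.ofReal) i j = ε * (v i * (S i j : ℂ)) + ((1 - ε) * (1 / n)) * v i := by
    intro i
    simp only [Matrix.map_apply, Matrix.add_apply, Matrix.smul_apply, Matrix.of_apply,
      smul_eq_mul]
    push_cast
    ring
  rw [Finset.sum_congr rfl fun i _ => key i, Finset.sum_add_distrib, ← Finset.mul_sum,
    ← Finset.mul_sum, h0, h j]
  ring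
end

section
/- Let S and M be n×n real row-stochastic matrices, let η ≥ 0 and μ ≥ 0 with η + μ < 1, and let G = ηS + μM + (1 − η − μ)(1/n)·eeᵀ be the NCDawareRank matrix. Then every complex eigenvalue λ of G with λ ≠ 1 satisfies |λ| ≤ η + μ; in particular the subdominant eigenvalue of G is bounded in modulus by η + μ. -/
open Matrix

/-- Every eigenvalue `λ ≠ 1` of the NCDawareRank matrix
`G = η S + μ M + (1 - η - μ) (1/n) e eᵀ`, built from row-stochastic matrices `S`
and `M`, satisfies `|λ| ≤ η + μ`; in particular the subdominant eigenvalue of `G`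
is bounded in modulus by `η + μ`. -/
theorem ncdawarerank_subdominant_le (n : ℕ) (hn : 0 < n)
    (S M : Matrix (Fin n) (Fin n) ℝ)
    (hS0 : ∀ i j, 0 ≤ S i j) (hS1 : ∀ i, ∑ j, S i j = 1)
    (hM0 : ∀ i j, 0 ≤ M i j) (hM1 : ∀ i, ∑ j, M i j = 1)
    (η μ : ℝ) (hη : 0 ≤ η) (hμ : 0 ≤ μ) (hημ : η + μ < 1) :
    ∀ lam : ℂ,
      lam ∈ spectrum ℂ
        ((η • S + μ • M + (1 - η - μ) • Matrix.of fun _ _ : Fin n => (1 : ℝ) / n).map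
          Complex.ofReal) →
      lam ≠ 1 → ‖lam‖ ≤ η + μ := by
  intro lam hlam hne
  rw [spectrum.mem_iff, Matrix.isUnit_iff_isUnit_det, isUnit_iff_ne_zero, not_not,
    ← Matrix.exists_vecMul_eq_zero_iff] at hlam
  obtain ⟨v, hv0, hv⟩ := hlam
  have hn' : (n : ℂ) ≠ 0 := by exact_mod_cast hn.ne'
  rw [Matrix.vecMul_sub, sub_eq_zero, Matrix.algebraMap_eq_diagonal] at hv
  have key : ∀ j, lam * v j = ∑ i, v i * ((η * S i j + μ * M i j : ℝ) : ℂ)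
      + (1 - η - μ) / n * ∑ i, v i := by
    intro j
    have h := congrFun hv j
    rw [Matrix.vecMul_diagonal] at h
    have h2 : lam * v j = v j * lam := mul_comm _ _
    rw [h2]
    refine Eq.trans (by simp) (h.trans ?_)
    rw [Matrix.vecMul, dotProduct, Finset.mul_sum, ← Finset.sum_add_distrib]
    refine Finset.sum_congr rfl fun i _ => ?_
    simp
    ring
  have hA : ∀ i, ∑ j, (η * S i j + μ * M i j) = η + μ := by
    intro i
    rw [Finset.sum_add_distrib, ← Finset.mul_sum, ← Finset.mul_sum, hS1, hM1]
    ring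
  have hsum : ∑ i, v i = 0 := by
    have h : lam * ∑ j, v j = ∑ i, v i := by
      rw [Finset.mul_sum, Finset.sum_congr rfl fun j _ => key j, Finset.sum_add_distrib,
        Finset.sum_comm]
      simp_rw [← Finset.mul_sum, ← Complex.ofReal_sum, hA]
      rw [← Finset.sum_mul]
      simp only [Finset.sum_const, Finset.card_univ, Fintype.card_fin, nsmul_eq_mul]
      push_cast
      field_simp
      ring
    have h3 : (lam - 1) * ∑ j, v j = 0 := by rw [sub_mul, h]; ring
    exact (mul_eq_zero.mp h3).resolve_left (sub_ne_zero.mpr hne)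
  have hpos : 0 < ∑ j, ‖v j‖ := by
    obtain ⟨j, hj⟩ := Function.ne_iff.mp hv0
    exact Finset.sum_pos' (fun _ _ => norm_nonneg _) ⟨j, Finset.mem_univ _, norm_pos_iff.mpr hj⟩
  have hle : ‖lam‖ * ∑ j, ‖v j‖ ≤ (η + μ) * ∑ j, ‖v j‖ := by
    calc ‖lam‖ * ∑ j, ‖v j‖ = ∑ j, ‖lam * v j‖ := by
          rw [Finset.mul_sum]; simp only [norm_mul]
      _ ≤ ∑ j, ∑ i, ‖v i‖ * (η * S i j + μ * M i j) := by
          refine Finset.sum_le_sum fun j _ => ?_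
          rw [key j, hsum, mul_zero, add_zero]
          refine (norm_sum_le _ _).trans (le_of_eq (Finset.sum_congr rfl fun i _ => ?_))
          rw [norm_mul, Complex.norm_real, Real.norm_of_nonneg
            (add_nonneg (mul_nonneg hη (hS0 i j)) (mul_nonneg hμ (hM0 i j)))]
      _ = (η + μ) * ∑ j, ‖v j‖ := by
          rw [Finset.sum_comm]
          simp_rw [← Finset.mul_sum, hA]
          rw [← Finset.sum_mul, mul_comm]
  exact le_of_mul_le_mul_right hle hpos
end

section
/- Let H be the random-walk transition matrix of a finite bipartite graph with nonempty parts, at least one edge, and no isolated vertices, let 0 < ε < 1, and let G = εH + (1−ε)(1/N)·eeᵀ be the corresponding Google matrix. Then −ε is an eigenvalue of G. In particular, the subdominant eigenvalue of the PageRank matrix built on a bipartite graph has modulus exactly ε. -/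
open Matrix

/-- The Google (PageRank) matrix `G = ε H + (1-ε) (1/N) e eᵀ` built on the bipartite
random-walk matrix `H`, where `N = |U| + |V|` is the number of vertices. -/
noncomputable def GoogleB {U V : Type*} [Fintype U] [Fintype V]
    (E : U → V → Prop) [∀ u v, Decidable (E u v)] (ε : ℝ) :
    Matrix (U ⊕ V) (U ⊕ V) ℝ :=
  ε • Hmat E + (1 - ε) • Matrix.of fun _ _ : U ⊕ V => (1 : ℝ) / (Fintype.card (U ⊕ V))

theorem mem_spec_iff_left {n : Type*} [Fintype n] [DecidableEq n] (A : Matrix n n ℂ) (l : ℂ) :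
    l ∈ spectrum ℂ A ↔ ∃ w : n → ℂ, w ≠ 0 ∧ ∀ j, ∑ i, w i * A i j = l * w j := by
  rw [spectrum.mem_iff, Matrix.isUnit_iff_isUnit_det, isUnit_iff_ne_zero, not_not,
    ← Matrix.exists_vecMul_eq_zero_iff]
  refine exists_congr fun w => and_congr_right fun _ => ?_
  rw [Matrix.vecMul_sub, sub_eq_zero, funext_iff]
  refine forall_congr' fun j => ?_
  rw [Algebra.algebraMap_eq_smul_one, Matrix.vecMul_smul, Matrix.vecMul_one]
  simp only [Pi.smul_apply, smul_eq_mul, Matrix.vecMul, dotProduct]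
  exact eq_comm

theorem Hmat_nonneg {U V : Type*} [Fintype U] [Fintype V]
    (E : U → V → Prop) [∀ u v, Decidable (E u v)] (i j : U ⊕ V) : 0 ≤ Hmat E i j := by
  rcases i with u | v <;> rcases j with u' | v' <;> simp only [Hmat, Matrix.of_apply] <;>
    first | exact le_rfl | (split_ifs <;> positivity)

theorem Hmat_row {U V : Type*} [Fintype U] [Fintype V]
    (E : U → V → Prop) [∀ u v, Decidable (E u v)]
    (hU : ∀ u : U, ∃ v : V, E u v) (hV : ∀ v : V, ∃ u : U, E u v) (i : U ⊕ V) :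
    ∑ j, Hmat E i j = 1 := by
  rcases i with u | v
  · obtain ⟨v, hv⟩ := hU u
    have h : ((Finset.univ.filter fun v' => E u v').card : ℝ) ≠ 0 := by
      rw [Nat.cast_ne_zero]
      exact Finset.card_ne_zero_of_mem (a := v) (by simp [hv])
    simp only [Fintype.sum_sum_type, Hmat, Matrix.of_apply, Finset.sum_const_zero, zero_add]
    rw [← Finset.sum_filter, Finset.sum_const, nsmul_eq_mul]
    field_simp
  · obtain ⟨u, hu⟩ := hV v
    have h : ((Finset.univ.filter fun u' => E u' v).card : ℝ) ≠ 0 := by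
      rw [Nat.cast_ne_zero]
      exact Finset.card_ne_zero_of_mem (a := u) (by simp [hu])
    simp only [Fintype.sum_sum_type, Hmat, Matrix.of_apply, Finset.sum_const_zero, add_zero]
    rw [← Finset.sum_filter, Finset.sum_const, nsmul_eq_mul]
    field_simp

/-- signed degree vector -/
noncomputable def sdeg {U V : Type*} [Fintype U] [Fintype V]
    (E : U → V → Prop) [∀ u v, Decidable (E u v)] : U ⊕ V → ℝ
  | Sum.inl u => ((Finset.univ.filter fun v' => E u v').card : ℝ)
  | Sum.inr v => -((Finset.univ.filter fun u' => E u' v).card : ℝ)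

theorem sdeg_sum {U V : Type*} [Fintype U] [Fintype V]
    (E : U → V → Prop) [∀ u v, Decidable (E u v)] : ∑ i, sdeg E i = 0 := by
  simp only [Fintype.sum_sum_type, sdeg, Finset.sum_neg_distrib, Finset.card_filter]
  push_cast
  rw [Finset.sum_comm, add_neg_cancel]

theorem sdeg_H {U V : Type*} [Fintype U] [Fintype V]
    (E : U → V → Prop) [∀ u v, Decidable (E u v)] (j : U ⊕ V) :
    ∑ i, sdeg E i * Hmat E i j = - sdeg E j := by
  rcases j with u | v
  · simp only [Fintype.sum_sum_type, Hmat, sdeg, Matrix.of_apply, mul_zero,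
      Finset.sum_const_zero, zero_add, Finset.card_filter (fun v' => E u v')]
    push_cast
    rw [← Finset.sum_neg_distrib]
    refine Finset.sum_congr rfl fun v _ => ?_
    split_ifs with h
    · have h : ((Finset.univ.filter fun u' => E u' v).card : ℝ) ≠ 0 := by
        rw [Nat.cast_ne_zero]
        exact Finset.card_ne_zero_of_mem (a := u) (by simp [h])
      field_simp
    · simp
  · simp only [Fintype.sum_sum_type, Hmat, sdeg, Matrix.of_apply, mul_zero, neg_neg,
      Finset.sum_const_zero, add_zero, Finset.card_filter (fun u' => E u' v)]
    push_cast
    refine Finset.sum_congr rfl fun u _ => ?_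
    split_ifs with h
    · have h : ((Finset.univ.filter fun v' => E u v').card : ℝ) ≠ 0 := by
        rw [Nat.cast_ne_zero]
        exact Finset.card_ne_zero_of_mem (a := v) (by simp [h])
      field_simp
    · simp

theorem google_left {U V : Type*} [Fintype U] [Fintype V]
    (E : U → V → Prop) [∀ u v, Decidable (E u v)] (ε : ℝ) (w : U ⊕ V → ℂ) (j : U ⊕ V) :
    ∑ i, w i * ((GoogleB E ε).map Complex.ofReal) i j =
      ε * ∑ i, w i * (Hmat E i j : ℂ) +
        (1 - ε) * (1 / (Fintype.card (U ⊕ V) : ℂ)) * ∑ i, w i := by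
  rw [Finset.mul_sum, Finset.mul_sum, ← Finset.sum_add_distrib]
  refine Finset.sum_congr rfl fun i _ => ?_
  simp only [GoogleB, Matrix.map_apply, Matrix.add_apply, Matrix.smul_apply, Matrix.of_apply,
    smul_eq_mul]
  push_cast
  ring

theorem google_neg_mem {U V : Type*} [Fintype U] [Fintype V]
    [DecidableEq U] [DecidableEq V]
    (E : U → V → Prop) [∀ u v, Decidable (E u v)]
    (hedge : ∃ u v, E u v) (ε : ℝ) :
    (-(ε : ℂ)) ∈ spectrum ℂ ((GoogleB E ε).map Complex.ofReal) := by
  rw [mem_spec_iff_left]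
  refine ⟨fun i => (sdeg E i : ℂ), ?_, fun j => ?_⟩
  · obtain ⟨u, v, h⟩ := hedge
    intro h0
    have h1 := congrFun h0 (Sum.inl u)
    simp only [sdeg, Pi.zero_apply, Complex.ofReal_natCast, Nat.cast_eq_zero] at h1
    exact Finset.card_ne_zero_of_mem (a := v) (by simp [h]) h1
  · rw [google_left]
    have h1 := congrArg Complex.ofReal (sdeg_sum E)
    have h2 := congrArg Complex.ofReal (sdeg_H E j)
    push_cast at h1 h2
    rw [h1, h2]
    ring

theorem google_bound {U V : Type*} [Fintype U] [Fintype V]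
    [DecidableEq U] [DecidableEq V] [Nonempty U]
    (E : U → V → Prop) [∀ u v, Decidable (E u v)]
    (hU : ∀ u : U, ∃ v : V, E u v) (hV : ∀ v : V, ∃ u : U, E u v)
    (ε : ℝ) (hε0 : 0 < ε) (l : ℂ)
    (hl : l ∈ spectrum ℂ ((GoogleB E ε).map Complex.ofReal)) (hl1 : l ≠ 1) : ‖l‖ ≤ ε := by
  rw [mem_spec_iff_left] at hl
  obtain ⟨w, hw, h⟩ := hl
  simp only [google_left] at h
  have hN : (Fintype.card (U ⊕ V) : ℂ) ≠ 0 := by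
    rw [Nat.cast_ne_zero]; exact Fintype.card_ne_zero
  have hs : ∑ i, w i = 0 := by
    have h1 := Finset.sum_congr (rfl : (Finset.univ : Finset (U ⊕ V)) = _) fun j _ => h j
    rw [Finset.sum_add_distrib, ← Finset.mul_sum, ← Finset.mul_sum, Finset.sum_comm,
      Finset.sum_const, nsmul_eq_mul, Finset.card_univ] at h1
    have h2 : ∑ i, ∑ j, w i * (Hmat E i j : ℂ) = ∑ i, w i := by
      refine Finset.sum_congr rfl fun i _ => ?_
      have := congrArg Complex.ofReal (Hmat_row E hU hV i)
      push_cast at this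
      rw [← Finset.mul_sum, this, mul_one]
    rw [h2] at h1
    have h3 : (1 - l) * ∑ i, w i = 0 := by
      rw [← Finset.mul_sum] at h1
      field_simp at h1
      linear_combination h1
    exact (mul_eq_zero.mp h3).resolve_left (sub_ne_zero.mpr hl1.symm)
  simp only [hs, mul_zero, add_zero] at h
  have hpos : 0 < ∑ i, ‖w i‖ := by
    obtain ⟨i, hi⟩ := Function.ne_iff.mp hw
    exact Finset.sum_pos' (fun _ _ => norm_nonneg _) ⟨i, Finset.mem_univ _, norm_pos_iff.mpr hi⟩
  refine le_of_mul_le_mul_right ?_ hpos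
  calc ‖l‖ * ∑ i, ‖w i‖ = ∑ j, ‖l * w j‖ := by simp only [Finset.mul_sum, norm_mul]
    _ = ∑ j, ε * ‖∑ i, w i * (Hmat E i j : ℂ)‖ := by
        refine Finset.sum_congr rfl fun j _ => ?_
        rw [← h j, norm_mul, Complex.norm_real, Real.norm_of_nonneg hε0.le]
    _ ≤ ∑ j, ε * ∑ i, ‖w i‖ * Hmat E i j := by
        refine Finset.sum_le_sum fun j _ => mul_le_mul_of_nonneg_left ?_ hε0.le
        refine (norm_sum_le _ _).trans (le_of_eq (Finset.sum_congr rfl fun i _ => ?_))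
        rw [norm_mul, Complex.norm_real, Real.norm_of_nonneg (Hmat_nonneg E i j)]
    _ = ε * ∑ i, ‖w i‖ := by
        rw [← Finset.mul_sum, Finset.sum_comm]
        simp only [← Finset.mul_sum, Hmat_row E hU hV, mul_one]

/-- `-ε` is an eigenvalue of the Google matrix `G = ε H + (1-ε)(1/N) e eᵀ` of a
bipartite graph; in particular, the subdominant eigenvalue of the PageRank matrix
built on a bipartite graph has modulus exactly `ε`. -/
theorem googleB_neg_eps_eigenvalue {U V : Type*} [Fintype U] [Fintype V]
    [DecidableEq U] [DecidableEq V] [Nonempty U] [Nonempty V]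
    (E : U → V → Prop) [∀ u v, Decidable (E u v)]
    (hedge : ∃ u v, E u v)
    (hnoIsolU : ∀ u : U, ∃ v : V, E u v) (hnoIsolV : ∀ v : V, ∃ u : U, E u v)
    (ε : ℝ) (hε0 : 0 < ε) (hε1 : ε < 1) :
    (-(ε : ℂ)) ∈ spectrum ℂ ((GoogleB E ε).map Complex.ofReal) ∧
    IsGreatest
      {r : ℝ | ∃ lam ∈ spectrum ℂ ((GoogleB E ε).map Complex.ofReal),
        lam ≠ 1 ∧ ‖lam‖ = r} ε := by
  have hm := google_neg_mem E hedge ε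
  refine ⟨hm, ⟨-(ε : ℂ), hm, ?_, ?_⟩, ?_⟩
  · intro h
    have := congrArg Complex.re h
    simp at this
    linarith
  · rw [norm_neg, Complex.norm_real, Real.norm_of_nonneg hε0.le]
  · rintro r ⟨l, hl, hl1, rfl⟩
    exact google_bound E hnoIsolU hnoIsolV ε hε0 l hl hl1
end
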